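/- Let 𝓓 = (Ω, 𝓑) be a β(i) design with parameter (v, k, d), where i ≥ 3 and v ≥ 2k, and set c = k−d. Assume v does not achieve the upper bound (d+2(i−1))·(k−d)/(i−1), i.e. (i−1)·v < (d+2(i−1))·(k−d). Then v ≤ k + γ₁, where γ₁ = ((2c−2i+2)d + 2(i−1)c − 3i + 4)/(2(i−2)) − (1/(2(i−1)(i−2)))·√( 4(i−1)(c−i+1)(c−2i+3)d² + 4(i−1)(3i−4)(c−i+1)(c−2i+3)d + (i−1)²·(4(2i−3)c² − 4(3i−4)(2i−3)c + 16i³ − 63i² + 80i − 32) ). Moreover, equality v = k + γ₁ holds if and only if the number of blocks B ∈ 𝓑 with |B ∩ X| = d+i−2 is the same for every X ∈ S₁. -/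

import Mathlib

open Finset

variable {α : Type*} [Fintype α] [DecidableEq α]

/-- `𝓑` is a design on the finite type `α` of cardinality `v`, with block size `k` and
maximal pairwise block intersection size `d`. -/
def IsDesign (𝓑 : Finset (Finset α)) (v k d : ℕ) : Prop :=
  Fintype.card α = v ∧ 2 ≤ 𝓑.card ∧ d < k ∧ k < v ∧
  (∀ B ∈ 𝓑, B.card = k) ∧
  (∀ B ∈ 𝓑, ∀ C ∈ 𝓑, B ≠ C → (B ∩ C).card ≤ d) ∧
  (∃ B ∈ 𝓑, ∃ C ∈ 𝓑, B ≠ C ∧ (B ∩ C).card = d)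

/-- `𝓑` is a `β(i)` design with parameters `(v, k, d)`: a design such that
`1 ≤ i ≤ (v - d + 1)/2` and every `(d + 2i - 1)`-element subset `X` of `Ω` admits a
unique block `B` with `|X ∩ B| ≥ d + i`. -/
def IsBetaDesign (𝓑 : Finset (Finset α)) (v k d i : ℕ) : Prop :=
  IsDesign 𝓑 v k d ∧ 1 ≤ i ∧ 2 * i ≤ v - d + 1 ∧
  ∀ X : Finset α, X.card = d + 2 * i - 1 →
    ∃! B, B ∈ 𝓑 ∧ d + i ≤ (X ∩ B).card

/-- The family `S₁` of all `(d + 2(i-2))`-element subsets `X` of `Ω` such that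
`|X ∩ B| ≤ d + i - 2` for every block `B ∈ 𝓑`. -/
def S1 (𝓑 : Finset (Finset α)) (d i : ℕ) : Finset (Finset α) :=
  (Finset.univ : Finset (Finset α)).filter
    (fun X => X.card = d + 2 * (i - 2) ∧ ∀ B ∈ 𝓑, (X ∩ B).card ≤ d + i - 2)

/-!
For a `(d + 2(i-2))`-set `X` let `n X` be the number of blocks meeting `X` in `d + i - 2` points,
the largest value allowed on `S₁`. Counting incidences expresses `∑ n` and `∑ n²` over `S₁` through
the number of blocks and the number of pairs of blocks meeting in `d` points. One level up, on the
`(d + 2(i-1))`-sets meeting every block in at most `d + i - 1` points, the `β(i)` property makes the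
corresponding count constant; this determines the number of such pairs and, by counting flags
`X ⊂ Y` between the two levels, the size of `S₁`. The variance `|S₁| ∑ n² - (∑ n)²` thus becomes a
function of the parameters. It is a positive multiple of
`((d + 2(i-1))c - (i-1)v) * ((2(i-1)(i-2)(v-k) - (i-1)L)² - D)`, whose first factor is positive by
hypothesis, so the square is at least `D`. As `v - k` lies to the left of the vertex of the
quadratic, it is at most the smaller root `γ₁`, with equality exactly when the variance vanishes.
-/

section

variable {β : Type*} [DecidableEq β]

theorem card_inter_union_add_card_inter_inter (X B C : Finset β) :
    #(X ∩ (B ∪ C)) + #(X ∩ (B ∩ C)) = #(X ∩ B) + #(X ∩ C) := by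
  rw [inter_union_distrib_left, inter_inter_distrib_left, card_union_add_card_inter]

theorem card_inter_add_card_inter_le (X B C : Finset β) :
    #(X ∩ B) + #(X ∩ C) ≤ #X + #(B ∩ C) := by
  rw [← card_inter_union_add_card_inter_inter]
  exact add_le_add (card_le_card inter_subset_left) (card_le_card inter_subset_right)

theorem card_inter_add_card_inter_eq_iff {X B C : Finset β} :
    #(X ∩ B) + #(X ∩ C) = #X + #(B ∩ C) ↔ B ∩ C ⊆ X ∧ X ⊆ B ∪ C := by
  have hunion := card_le_card (inter_subset_left : X ∩ (B ∪ C) ⊆ X)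
  have hinter := card_le_card (inter_subset_right : X ∩ (B ∩ C) ⊆ B ∩ C)
  rw [← card_inter_union_add_card_inter_inter, ← inter_eq_right, ← inter_eq_left]
  constructor
  · intro h
    exact ⟨eq_of_subset_of_card_le inter_subset_right (by omega),
      eq_of_subset_of_card_le inter_subset_left (by omega)⟩
  · rintro ⟨h₁, h₂⟩
    rw [h₁, h₂]

theorem card_filter_Icc_card_inter_eq {R P Q : Finset β} (hRP : Disjoint R P)
    (hRQ : Disjoint R Q) (hPQ : Disjoint P Q) (x y : ℕ) :
    #{X ∈ Icc R (R ∪ (P ∪ Q)) | #(X ∩ P) = x ∧ #(X ∩ Q) = y}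
      = (#P).choose x * (#Q).choose y := by
  rw [← card_powersetCard x P, ← card_powersetCard y Q, ← card_product]
  have inter_left {U W : Finset β} (hU : U ⊆ P) (hW : W ⊆ Q) : (R ∪ (U ∪ W)) ∩ P = U := by
    rw [union_inter_distrib_right, union_inter_distrib_right, disjoint_iff_inter_eq_empty.1 hRP,
      inter_eq_left.2 hU, disjoint_iff_inter_eq_empty.1 (hPQ.symm.mono_left hW), union_empty,
      empty_union]
  have inter_right {U W : Finset β} (hU : U ⊆ P) (hW : W ⊆ Q) : (R ∪ (U ∪ W)) ∩ Q = W := by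
    rw [union_inter_distrib_right, union_inter_distrib_right, disjoint_iff_inter_eq_empty.1 hRQ,
      inter_eq_left.2 hW, disjoint_iff_inter_eq_empty.1 (hPQ.mono_left hU), empty_union,
      empty_union]
  refine card_bij' (fun X _ ↦ (X ∩ P, X ∩ Q)) (fun p _ ↦ R ∪ (p.1 ∪ p.2)) ?_ ?_ ?_ ?_
  · intro X hX
    simp only [mem_filter, mem_product, mem_powersetCard] at hX ⊢
    exact ⟨⟨inter_subset_right, hX.2.1⟩, inter_subset_right, hX.2.2⟩
  · rintro ⟨U, W⟩ h
    simp only [mem_product, mem_powersetCard] at h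
    obtain ⟨⟨hU, hUx⟩, hW, hWy⟩ := h
    simp only [mem_filter, mem_Icc, inter_left hU hW, inter_right hU hW]
    exact ⟨⟨subset_union_left, union_subset_union_right (union_subset_union hU hW)⟩, hUx, hWy⟩
  · intro X hX
    obtain ⟨hRX, hXU⟩ := mem_Icc.1 (mem_filter.1 hX).1
    calc R ∪ (X ∩ P ∪ X ∩ Q) = X ∩ R ∪ (X ∩ P ∪ X ∩ Q) := by rw [inter_eq_right.2 hRX]
      _ = X := by rw [← inter_union_distrib_left, ← inter_union_distrib_left, inter_eq_left.2 hXU]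
  · rintro ⟨U, W⟩ h
    simp only [mem_product, mem_powersetCard] at h
    exact Prod.ext (inter_left h.1.1 h.2.1) (inter_right h.1.1 h.2.1)

theorem sum_sum_sub_sq {ι R : Type*} [CommRing R] (S : Finset ι) (f : ι → R) :
    ∑ x ∈ S, ∑ y ∈ S, (f x - f y) ^ 2
      = 2 * (#S * ∑ x ∈ S, f x ^ 2 - (∑ x ∈ S, f x) ^ 2) := by
  simp only [sub_sq, sum_add_distrib, sum_sub_distrib, sum_const, nsmul_eq_mul, ← mul_sum,
    ← sum_mul]
  ring

theorem card_mul_sum_sq_eq_sq_sum_iff {ι R : Type*} [CommRing R] [LinearOrder R]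
    [IsStrictOrderedRing R] {S : Finset ι} {f : ι → R} :
    #S * ∑ x ∈ S, f x ^ 2 = (∑ x ∈ S, f x) ^ 2 ↔ ∀ x ∈ S, ∀ y ∈ S, f x = f y := by
  have hzero := sum_eq_zero_iff_of_nonneg (s := S) (f := fun x ↦ ∑ y ∈ S, (f x - f y) ^ 2)
    fun x _ ↦ sum_nonneg fun y _ ↦ sq_nonneg _
  rw [sum_sum_sub_sq, mul_eq_zero_iff_left two_ne_zero, sub_eq_zero] at hzero
  rw [hzero]
  refine forall₂_congr fun x _ ↦ ?_
  rw [sum_eq_zero_iff_of_nonneg fun y _ ↦ sq_nonneg _]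
  simp only [sq_eq_zero_iff, sub_eq_zero]

theorem exists_pos_eq_mul_of_mul_eq_mul {K : Type*} [Field K] [LinearOrder K]
    [IsStrictOrderedRing K] {a b x y : K} (ha : 0 < a) (hb : 0 < b) (h : x * a = b * y) :
    ∃ κ, 0 < κ ∧ x = κ * y :=
  ⟨b / a, div_pos hb ha, by rw [div_mul_eq_mul_div, ← h, mul_div_cancel_right₀ _ ha.ne']⟩

theorem card_filter_add_card_mul_eq_card {ι κ : Type*} {s : Finset ι} {t : Finset κ} {n : ℕ}
    {p : ι → Prop} {r : ι → κ → Prop} [DecidablePred p] [∀ a b, Decidable (r a b)]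
    (hs : ∀ a ∈ s, (if p a then 1 else 0) + #{b ∈ t | r a b} = 1)
    (ht : ∀ b ∈ t, #{a ∈ s | r a b} = n) : #{a ∈ s | p a} + #t * n = #s :=
  calc #{a ∈ s | p a} + #t * n = #{a ∈ s | p a} + ∑ b ∈ t, #{a ∈ s | r a b} := by
        rw [sum_congr rfl ht, sum_const, smul_eq_mul]
    _ = ∑ a ∈ s, ((if p a then 1 else 0) + #{b ∈ t | r a b}) := by
        rw [sum_add_distrib, card_filter]
        exact congrArg _ (sum_card_bipartiteAbove_eq_sum_card_bipartiteBelow r).symm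
    _ = #s := by rw [sum_congr rfl hs, ← card_eq_sum_ones]

/-- The blocks that meet `X` in exactly `d + m` points, the largest intersection allowed to a
member of `levelFamily 𝓑 d m`. -/
def extremalBlocks (𝓑 : Finset (Finset β)) (d m : ℕ) (X : Finset β) : Finset (Finset β) :=
  {B ∈ 𝓑 | #(X ∩ B) = d + m}

variable {𝓑 : Finset (Finset β)} {d m : ℕ} {X B C : Finset β}

theorem mem_extremalBlocks : B ∈ extremalBlocks 𝓑 d m X ↔ B ∈ 𝓑 ∧ #(X ∩ B) = d + m :=
  mem_filter

theorem card_inter_eq_of_mem_extremalBlocks_of_ne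
    (hd : (𝓑 : Set (Finset β)).Pairwise fun B C ↦ #(B ∩ C) ≤ d) (hX : #X = d + 2 * m)
    (hB : B ∈ extremalBlocks 𝓑 d m X) (hC : C ∈ extremalBlocks 𝓑 d m X)
    (hne : B ≠ C) : #(B ∩ C) = d := by
  obtain ⟨hB, hXB⟩ := mem_extremalBlocks.1 hB
  obtain ⟨hC, hXC⟩ := mem_extremalBlocks.1 hC
  have hBC := hd hB hC hne
  have hsum := card_inter_add_card_inter_le X B C
  omega

end

theorem card_filter_card_inter_eq (B : Finset α) (x y : ℕ) :
    #{X : Finset α | #X = x + y ∧ #(X ∩ B) = x}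
      = (#B).choose x * (Fintype.card α - #B).choose y := by
  rw [← card_compl, ← card_filter_Icc_card_inter_eq (disjoint_empty_left _)
    (disjoint_empty_left _) (disjoint_compl_right (a := B)) x y]
  congr 1
  ext X
  have hX : #(X ∩ B) + #(X ∩ Bᶜ) = #X := by
    rw [← sdiff_eq_inter_compl, card_inter_add_card_sdiff]
  simp only [mem_filter, mem_univ, true_and, mem_Icc, union_compl, empty_union, subset_univ,
    empty_subset]
  omega

theorem card_filter_card_inter_eq_and (B C : Finset α) (x y : ℕ) :
    #{X : Finset α | #X = #(B ∩ C) + (x + y) ∧ #(X ∩ B) = #(B ∩ C) + x ∧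
        #(X ∩ C) = #(B ∩ C) + y}
      = (#(B \ C)).choose x * (#(C \ B)).choose y := by
  rw [← card_filter_Icc_card_inter_eq (R := B ∩ C) (P := B \ C) (Q := C \ B)
    (disjoint_sdiff_inter B C).symm (inter_comm B C ▸ (disjoint_sdiff_inter C B).symm)
    disjoint_sdiff_sdiff x y]
  congr 1
  ext X
  have hunion : B ∩ C ∪ (B \ C ∪ C \ B) = B ∪ C := by
    ext p; simp only [mem_union, mem_inter, mem_sdiff]; tauto
  have hB : #(X ∩ (B \ C)) + #(X ∩ (B ∩ C)) = #(X ∩ B) := by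
    rw [← inter_sdiff_assoc, ← inter_assoc, card_sdiff_add_card_inter]
  have hC : #(X ∩ (C \ B)) + #(X ∩ (B ∩ C)) = #(X ∩ C) := by
    rw [← inter_sdiff_assoc, inter_comm B, ← inter_assoc, card_sdiff_add_card_inter]
  simp only [mem_filter, mem_univ, true_and, mem_Icc, hunion]
  rw [← card_inter_add_card_inter_eq_iff]
  have hsub := card_inter_add_card_inter_le X B C
  constructor
  · rintro ⟨hX, hXB, hXC⟩
    have h := (card_inter_add_card_inter_eq_iff (X := X) (B := B) (C := C)).1 (by omega)
    rw [inter_eq_right.2 h.1] at hB hC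
    omega
  · rintro ⟨h, hXB, hXC⟩
    rw [inter_eq_right.2 (card_inter_add_card_inter_eq_iff.1 h).1] at hB hC
    omega

theorem sum_card_filter_union_mem_eq (S S' : Finset (Finset α)) (n : ℕ) :
    ∑ X ∈ S, #{T ∈ powersetCard n Xᶜ | X ∪ T ∈ S'}
      = ∑ Y ∈ S', #{T ∈ powersetCard n Y | Y \ T ∈ S} := by
  rw [← card_sigma, ← card_sigma]
  refine card_bij' (fun p _ ↦ ⟨p.1 ∪ p.2, p.2⟩) (fun p _ ↦ ⟨p.1 \ p.2, p.2⟩) ?_ ?_ ?_ ?_ <;>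
    rintro ⟨X, T⟩ h <;>
    simp only [mem_sigma, mem_filter, mem_powersetCard] at h ⊢
  · obtain ⟨hX, ⟨hT, hTn⟩, hXT⟩ := h
    rw [union_sdiff_cancel_right (subset_compl_iff_disjoint_left.1 hT)]
    exact ⟨hXT, ⟨subset_union_right, hTn⟩, hX⟩
  · obtain ⟨hY, ⟨hT, hTn⟩, hYT⟩ := h
    rw [sdiff_union_of_subset hT]
    exact ⟨hYT, ⟨subset_compl_iff_disjoint_left.2 sdiff_disjoint, hTn⟩, hY⟩
  · rw [union_sdiff_cancel_right (subset_compl_iff_disjoint_left.1 h.2.1.1)]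
  · rw [sdiff_union_of_subset h.2.1.1]

/-- The `(d + 2m)`-subsets meeting every block in at most `d + m` points. The family `S₁` of a
`β(i)` design is the case `m = i - 2`; the case `m = i - 1` is the family `S₀` of sets next to it,
on which the `β(i)` property acts. -/
def levelFamily (𝓑 : Finset (Finset α)) (d m : ℕ) : Finset (Finset α) :=
  {X | #X = d + 2 * m ∧ ∀ B ∈ 𝓑, #(X ∩ B) ≤ d + m}

/-- The `p`-th moment, over `levelFamily 𝓑 d m`, of the number of extremal blocks. -/
def levelMoment (𝓑 : Finset (Finset α)) (d m p : ℕ) : ℕ :=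
  ∑ X ∈ levelFamily 𝓑 d m, #(extremalBlocks 𝓑 d m X) ^ p

section Level

variable {𝓑 : Finset (Finset α)} {k d m : ℕ} {X Y Z B C : Finset α}

theorem mem_levelFamily :
    X ∈ levelFamily 𝓑 d m ↔ #X = d + 2 * m ∧ ∀ B ∈ 𝓑, #(X ∩ B) ≤ d + m := by
  simp only [levelFamily, mem_filter, mem_univ, true_and]

theorem levelMoment_zero : levelMoment 𝓑 d m 0 = #(levelFamily 𝓑 d m) := by
  simp only [levelMoment, pow_zero, card_eq_sum_ones]

theorem ite_mem_levelFamily_add_card_filter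
    (hd : (𝓑 : Set (Finset α)).Pairwise fun B C ↦ #(B ∩ C) ≤ d) (hZ : #Z = d + 2 * m) :
    (if Z ∈ levelFamily 𝓑 d m then 1 else 0) + #{B ∈ 𝓑 | d + m < #(Z ∩ B)} = 1 := by
  split_ifs with h
  · rw [filter_false_of_mem fun B hB ↦ ((mem_levelFamily.1 h).2 B hB).not_gt, card_empty]
  · rw [mem_levelFamily, not_and] at h
    obtain ⟨B, hB, hlt⟩ : ∃ B ∈ 𝓑, d + m < #(Z ∩ B) := by simpa using h hZ
    rw [zero_add, card_eq_one]
    refine ⟨B, eq_singleton_iff_unique_mem.2 ⟨mem_filter.2 ⟨hB, hlt⟩, fun C hC ↦ ?_⟩⟩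
    obtain ⟨hC, hltC⟩ := mem_filter.1 hC
    by_contra hne
    have hBC := hd hC hB hne
    have hsum := card_inter_add_card_inter_le Z C B
    omega

theorem mem_levelFamily_of_mem_extremalBlocks
    (hd : (𝓑 : Set (Finset α)).Pairwise fun B C ↦ #(B ∩ C) ≤ d) (hX : #X = d + 2 * m)
    (hB : B ∈ extremalBlocks 𝓑 d m X) : X ∈ levelFamily 𝓑 d m := by
  obtain ⟨hB, hXB⟩ := mem_extremalBlocks.1 hB
  refine mem_levelFamily.2 ⟨hX, fun C hC ↦ ?_⟩
  obtain rfl | hne := eq_or_ne B C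
  · exact hXB.le
  · have hBC := hd hB hC hne
    have hsum := card_inter_add_card_inter_le X B C
    omega

theorem levelMoment_one (hk : (𝓑 : Set (Finset α)).Sized k)
    (hd : (𝓑 : Set (Finset α)).Pairwise fun B C ↦ #(B ∩ C) ≤ d) :
    levelMoment 𝓑 d m 1 = #𝓑 * (k.choose (d + m) * (Fintype.card α - k).choose m) := by
  simp only [levelMoment, pow_one]
  calc ∑ X ∈ levelFamily 𝓑 d m, #(extremalBlocks 𝓑 d m X)
      = ∑ B ∈ 𝓑, #{X ∈ levelFamily 𝓑 d m | #(X ∩ B) = d + m} :=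
        sum_card_bipartiteAbove_eq_sum_card_bipartiteBelow fun X B ↦ #(X ∩ B) = d + m
    _ = ∑ _ ∈ 𝓑, k.choose (d + m) * (Fintype.card α - k).choose m := by
        refine sum_congr rfl fun B hB ↦ ?_
        rw [← hk hB, ← card_filter_card_inter_eq B (d + m) m]
        congr 1
        ext X
        simp only [mem_filter, mem_univ, true_and, add_assoc, ← two_mul]
        exact and_congr_left fun hXB ↦ ⟨fun hX ↦ (mem_levelFamily.1 hX).1, fun hX ↦
          mem_levelFamily_of_mem_extremalBlocks hd hX (mem_extremalBlocks.2 ⟨hB, hXB⟩)⟩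
    _ = #𝓑 * (k.choose (d + m) * (Fintype.card α - k).choose m) := by
        rw [sum_const, smul_eq_mul]

theorem card_filter_levelFamily_mem_extremalBlocks (hk : (𝓑 : Set (Finset α)).Sized k)
    (hd : (𝓑 : Set (Finset α)).Pairwise fun B C ↦ #(B ∩ C) ≤ d) (hB : B ∈ 𝓑)
    (hC : C ∈ 𝓑) (hne : B ≠ C) :
    #{X ∈ levelFamily 𝓑 d m | B ∈ extremalBlocks 𝓑 d m X ∧ C ∈ extremalBlocks 𝓑 d m X}
      = if #(B ∩ C) = d then (k - d).choose m ^ 2 else 0 := by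
  split_ifs with hBC
  · have hdiff : #(B \ C) = k - d ∧ #(C \ B) = k - d := by
      have hB' := card_sdiff_add_card_inter B C
      have hC' := card_sdiff_add_card_inter C B
      rw [inter_comm] at hC'
      rw [hk hB] at hB'
      rw [hk hC] at hC'
      omega
    have hcount := card_filter_card_inter_eq_and B C m m
    rw [hdiff.1, hdiff.2, hBC, ← sq, ← two_mul] at hcount
    rw [← hcount]
    congr 1
    ext X
    simp only [mem_filter, mem_univ, true_and, mem_extremalBlocks, hB, hC]
    exact and_congr_left fun hX ↦ ⟨fun hXm ↦ (mem_levelFamily.1 hXm).1, fun hXc ↦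
      mem_levelFamily_of_mem_extremalBlocks hd hXc (mem_extremalBlocks.2 ⟨hB, hX.1⟩)⟩
  · rw [filter_false_of_mem fun X hX hBCX ↦ hBC ?_, card_empty]
    exact card_inter_eq_of_mem_extremalBlocks_of_ne hd (mem_levelFamily.1 hX).1 hBCX.1 hBCX.2 hne

theorem levelMoment_two (hk : (𝓑 : Set (Finset α)).Sized k)
    (hd : (𝓑 : Set (Finset α)).Pairwise fun B C ↦ #(B ∩ C) ≤ d) :
    levelMoment 𝓑 d m 2 = levelMoment 𝓑 d m 1
      + #{p ∈ 𝓑.offDiag | #(p.1 ∩ p.2) = d} * (k - d).choose m ^ 2 := by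
  have hsq (X : Finset α) : #(extremalBlocks 𝓑 d m X) ^ 2 = #(extremalBlocks 𝓑 d m X) ^ 1
      + #{p ∈ 𝓑.offDiag | p.1 ∈ extremalBlocks 𝓑 d m X ∧ p.2 ∈ extremalBlocks 𝓑 d m X} := by
    have hoff : {p ∈ 𝓑.offDiag | p.1 ∈ extremalBlocks 𝓑 d m X ∧ p.2 ∈ extremalBlocks 𝓑 d m X}
        = (extremalBlocks 𝓑 d m X).offDiag := by
      ext p
      simp only [mem_filter, mem_offDiag, mem_extremalBlocks]
      tauto
    rw [hoff, offDiag_card, sq, pow_one, Nat.add_sub_cancel' (Nat.le_mul_self _)]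
  simp only [levelMoment, hsq, sum_add_distrib]
  congr 1
  calc ∑ X ∈ levelFamily 𝓑 d m,
        #{p ∈ 𝓑.offDiag | p.1 ∈ extremalBlocks 𝓑 d m X ∧ p.2 ∈ extremalBlocks 𝓑 d m X}
      = ∑ p ∈ 𝓑.offDiag, #{X ∈ levelFamily 𝓑 d m |
          p.1 ∈ extremalBlocks 𝓑 d m X ∧ p.2 ∈ extremalBlocks 𝓑 d m X} := by
        simp only [card_filter]
        exact sum_comm
    _ = ∑ p ∈ 𝓑.offDiag, if #(p.1 ∩ p.2) = d then (k - d).choose m ^ 2 else 0 :=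
        sum_congr rfl fun p hp ↦ by
          obtain ⟨hB, hC, hne⟩ := mem_offDiag.1 hp
          exact card_filter_levelFamily_mem_extremalBlocks hk hd hB hC hne
    _ = #{p ∈ 𝓑.offDiag | #(p.1 ∩ p.2) = d} * (k - d).choose m ^ 2 := by
        rw [← sum_filter, sum_const, smul_eq_mul]

theorem card_extremalBlocks_mul (hk : (𝓑 : Set (Finset α)).Sized k)
    (hβ : ∀ X : Finset α, #X = d + 2 * m + 1 → ∃! B, B ∈ 𝓑 ∧ d + m + 1 ≤ #(X ∩ B))
    (hY : Y ∈ levelFamily 𝓑 d m) :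
    #(extremalBlocks 𝓑 d m Y) * (k - (d + m)) = Fintype.card α - (d + 2 * m) := by
  obtain ⟨hYcard, hYle⟩ := mem_levelFamily.1 hY
  have hone : ∀ p ∈ Yᶜ, #{B ∈ extremalBlocks 𝓑 d m Y | p ∈ B} = 1 := by
    intro p hp
    rw [mem_compl] at hp
    have hiff (B : Finset α) : B ∈ {B ∈ extremalBlocks 𝓑 d m Y | p ∈ B} ↔
        B ∈ 𝓑 ∧ d + m + 1 ≤ #(insert p Y ∩ B) := by
      rw [mem_filter, mem_extremalBlocks, and_assoc]
      refine and_congr_right fun hB ↦ ?_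
      have hle := hYle B hB
      by_cases hpB : p ∈ B
      · have hpYB : p ∉ Y ∩ B := fun h ↦ hp (mem_inter.1 h).1
        rw [insert_inter_of_mem hpB, card_insert_of_notMem hpYB]
        simp only [hpB, and_true]
        omega
      · rw [insert_inter_of_notMem hpB]
        simp only [hpB, and_false, false_iff]
        omega
    rw [card_eq_one_iff_existsUnique]
    simpa only [hiff] using hβ (insert p Y) (by rw [card_insert_of_notMem hp, hYcard])
  have hdiff : ∀ B ∈ extremalBlocks 𝓑 d m Y, #(Yᶜ ∩ B) = k - (d + m) := by
    intro B hB
    obtain ⟨hB, hYB⟩ := mem_extremalBlocks.1 hB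
    rw [inter_comm, ← sdiff_eq_inter_compl, card_sdiff, hYB, hk hB]
  calc #(extremalBlocks 𝓑 d m Y) * (k - (d + m))
      = ∑ B ∈ extremalBlocks 𝓑 d m Y, #(Yᶜ ∩ B) := by
        rw [sum_congr rfl hdiff, sum_const, smul_eq_mul]
    _ = Fintype.card α - (d + 2 * m) := by rw [sum_card_inter hone, mul_one, card_compl, hYcard]

theorem levelMoment_succ_mul (hk : (𝓑 : Set (Finset α)).Sized k)
    (hβ : ∀ X : Finset α, #X = d + 2 * m + 1 → ∃! B, B ∈ 𝓑 ∧ d + m + 1 ≤ #(X ∩ B)) (p : ℕ) :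
    levelMoment 𝓑 d m (p + 1) * (k - (d + m))
      = (Fintype.card α - (d + 2 * m)) * levelMoment 𝓑 d m p := by
  rw [levelMoment, levelMoment, sum_mul, mul_sum]
  refine sum_congr rfl fun Y hY ↦ ?_
  rw [pow_succ, mul_assoc, card_extremalBlocks_mul hk hβ hY, mul_comm]

theorem card_filter_union_mem_levelFamily_add (hk : (𝓑 : Set (Finset α)).Sized k)
    (hd : (𝓑 : Set (Finset α)).Pairwise fun B C ↦ #(B ∩ C) ≤ d) (hX : X ∈ levelFamily 𝓑 d m) :
    #{T ∈ powersetCard 2 Xᶜ | X ∪ T ∈ levelFamily 𝓑 d (m + 1)}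
        + #(extremalBlocks 𝓑 d m X) * (k - (d + m)).choose 2
      = (Fintype.card α - (d + 2 * m)).choose 2 := by
  obtain ⟨hXcard, hXle⟩ := mem_levelFamily.1 hX
  have hone : ∀ T ∈ powersetCard 2 Xᶜ, (if X ∪ T ∈ levelFamily 𝓑 d (m + 1) then 1 else 0)
      + #{B ∈ extremalBlocks 𝓑 d m X | T ⊆ B} = 1 := by
    intro T hT
    obtain ⟨hTX, hTcard⟩ := mem_powersetCard.1 hT
    have hdisj : Disjoint X T := subset_compl_iff_disjoint_left.1 hTX
    have hXT : #(X ∪ T) = d + 2 * (m + 1) := by rw [card_union_of_disjoint hdisj]; omega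
    have hiff (B : Finset α) (hB : B ∈ 𝓑) :
        (#(X ∩ B) = d + m ∧ T ⊆ B) ↔ d + (m + 1) < #((X ∪ T) ∩ B) := by
      have hle := hXle B hB
      have hTB : #(T ∩ B) ≤ #T := card_le_card inter_subset_left
      rw [union_inter_distrib_right, card_union_of_disjoint
        (hdisj.mono inter_subset_left inter_subset_left), ← inter_eq_left,
        ← eq_iff_card_le_of_subset inter_subset_left]
      omega
    rw [extremalBlocks, filter_filter, filter_congr hiff,
      ite_mem_levelFamily_add_card_filter hd hXT]
  have hpairs : ∀ B ∈ extremalBlocks 𝓑 d m X,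
      #{T ∈ powersetCard 2 Xᶜ | T ⊆ B} = (k - (d + m)).choose 2 := by
    intro B hB
    obtain ⟨hB, hXB⟩ := mem_extremalBlocks.1 hB
    have hset : {T ∈ powersetCard 2 Xᶜ | T ⊆ B} = powersetCard 2 (B \ X) := by
      ext T
      simp only [mem_filter, mem_powersetCard, sdiff_eq_inter_compl, subset_inter_iff]
      tauto
    rw [hset, card_powersetCard, card_sdiff, hXB, hk hB]
  refine (card_filter_add_card_mul_eq_card hone hpairs).trans ?_
  rw [card_powersetCard, card_compl, hXcard]

theorem card_filter_sdiff_mem_levelFamily_add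
    (hd : (𝓑 : Set (Finset α)).Pairwise fun B C ↦ #(B ∩ C) ≤ d)
    (hY : Y ∈ levelFamily 𝓑 d (m + 1)) :
    #{T ∈ powersetCard 2 Y | Y \ T ∈ levelFamily 𝓑 d m}
        + #(extremalBlocks 𝓑 d (m + 1) Y) * (m + 1).choose 2
      = (d + 2 * (m + 1)).choose 2 := by
  obtain ⟨hYcard, hYle⟩ := mem_levelFamily.1 hY
  have hone : ∀ T ∈ powersetCard 2 Y, (if Y \ T ∈ levelFamily 𝓑 d m then 1 else 0)
      + #{B ∈ extremalBlocks 𝓑 d (m + 1) Y | Disjoint T B} = 1 := by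
    intro T hT
    obtain ⟨hTY, hTcard⟩ := mem_powersetCard.1 hT
    have hYT : #(Y \ T) = d + 2 * m := by rw [card_sdiff_of_subset hTY]; omega
    have hiff (B : Finset α) (hB : B ∈ 𝓑) :
        (#(Y ∩ B) = d + (m + 1) ∧ Disjoint T B) ↔ d + m < #((Y \ T) ∩ B) := by
      have hle := hYle B hB
      have hsplit : #((Y \ T) ∩ B) + #(T ∩ B) = #(Y ∩ B) := by
        rw [← card_union_of_disjoint (sdiff_disjoint.mono inter_subset_left inter_subset_left),
          ← union_inter_distrib_right, sdiff_union_of_subset hTY]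
      rw [disjoint_iff_inter_eq_empty, ← card_eq_zero]
      omega
    rw [extremalBlocks, filter_filter, filter_congr hiff,
      ite_mem_levelFamily_add_card_filter hd hYT]
  have hpairs : ∀ B ∈ extremalBlocks 𝓑 d (m + 1) Y,
      #{T ∈ powersetCard 2 Y | Disjoint T B} = (m + 1).choose 2 := by
    intro B hB
    have hset : {T ∈ powersetCard 2 Y | Disjoint T B} = powersetCard 2 (Y \ B) := by
      ext T
      simp only [mem_filter, mem_powersetCard, subset_sdiff]
      tauto
    have hYB : #(Y \ B) + #(Y ∩ B) = #Y := card_sdiff_add_card_inter Y B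
    rw [hset, card_powersetCard, show #(Y \ B) = m + 1 by
      have := (mem_extremalBlocks.1 hB).2; omega]
  refine (card_filter_add_card_mul_eq_card hone hpairs).trans ?_
  rw [card_powersetCard, hYcard]

theorem levelMoment_zero_mul_choose_two_add (hk : (𝓑 : Set (Finset α)).Sized k)
    (hd : (𝓑 : Set (Finset α)).Pairwise fun B C ↦ #(B ∩ C) ≤ d) :
    levelMoment 𝓑 d m 0 * (Fintype.card α - (d + 2 * m)).choose 2
        + levelMoment 𝓑 d (m + 1) 1 * (m + 1).choose 2
      = levelMoment 𝓑 d (m + 1) 0 * (d + 2 * (m + 1)).choose 2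
        + levelMoment 𝓑 d m 1 * (k - (d + m)).choose 2 := by
  -- Count the flags `X ⊂ Y = X ∪ T` with `|T| = 2` between the two levels from both ends.
  have hup := sum_congr rfl fun X (hX : X ∈ levelFamily 𝓑 d m) ↦
    card_filter_union_mem_levelFamily_add hk hd hX
  have hdown := sum_congr rfl fun Y (hY : Y ∈ levelFamily 𝓑 d (m + 1)) ↦
    card_filter_sdiff_mem_levelFamily_add hd hY
  have hflag := sum_card_filter_union_mem_eq (levelFamily 𝓑 d m) (levelFamily 𝓑 d (m + 1)) 2
  simp only [sum_add_distrib, ← sum_mul, sum_const, smul_eq_mul] at hup hdown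
  rw [levelMoment_zero, levelMoment_zero]
  simp only [levelMoment, pow_one]
  omega

theorem levelMoment_succ_one_mul (hk : (𝓑 : Set (Finset α)).Sized k)
    (hd : (𝓑 : Set (Finset α)).Pairwise fun B C ↦ #(B ∩ C) ≤ d) :
    levelMoment 𝓑 d (m + 1) 1 * ((d + m + 1) * (m + 1))
      = levelMoment 𝓑 d m 1 * ((k - (d + m)) * (Fintype.card α - k - m)) := by
  have hkc := Nat.choose_succ_right_eq k (d + m)
  have hvc := Nat.choose_succ_right_eq (Fintype.card α - k) m
  rw [levelMoment_one hk hd, levelMoment_one hk hd, ← add_assoc]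
  calc _ = #𝓑 * ((k.choose (d + m + 1) * (d + m + 1))
        * ((Fintype.card α - k).choose (m + 1) * (m + 1))) := by ring
    _ = _ := by rw [hkc, hvc]; ring

theorem levelMoment_succ_two_mul_sq_add (hk : (𝓑 : Set (Finset α)).Sized k)
    (hd : (𝓑 : Set (Finset α)).Pairwise fun B C ↦ #(B ∩ C) ≤ d) :
    levelMoment 𝓑 d (m + 1) 2 * (m + 1) ^ 2 + levelMoment 𝓑 d m 1 * (k - d - m) ^ 2
      = levelMoment 𝓑 d m 2 * (k - d - m) ^ 2 + levelMoment 𝓑 d (m + 1) 1 * (m + 1) ^ 2 := by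
  have hkc := Nat.choose_succ_right_eq (k - d) m
  rw [levelMoment_two (m := m + 1) hk hd, levelMoment_two (m := m) hk hd]
  linear_combination #{p ∈ 𝓑.offDiag | #(p.1 ∩ p.2) = d} * (congrArg (· ^ 2) hkc)

end Level

/-- The coefficient `L` in the bound `γ₁ = L / (2(i-2)) - √D / (2(i-1)(i-2))`. -/
def gammaLinear (c d i : ℝ) : ℝ :=
  (2 * c - 2 * i + 2) * d + 2 * (i - 1) * c - 3 * i + 4

/-- The radicand `D` in the bound `γ₁ = L / (2(i-2)) - √D / (2(i-1)(i-2))`. -/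
def gammaRadicand (c d i : ℝ) : ℝ :=
  4 * (i - 1) * (c - i + 1) * (c - 2 * i + 3) * d ^ 2
    + 4 * (i - 1) * (3 * i - 4) * (c - i + 1) * (c - 2 * i + 3) * d
    + (i - 1) ^ 2 * (4 * (2 * i - 3) * c ^ 2 - 4 * (3 * i - 4) * (2 * i - 3) * c
      + 16 * i ^ 3 - 63 * i ^ 2 + 80 * i - 32)

/-- The bound `γ₁` on `v - k`, the smaller zero of the quadratic
`x ↦ (2(i-1)(i-2)x - (i-1)L)² - D`. -/
noncomputable def gammaOne (c d i : ℝ) : ℝ :=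
  gammaLinear c d i / (2 * (i - 2))
    - (1 / (2 * (i - 1) * (i - 2))) * √(gammaRadicand c d i)

section GammaOne

variable {c d i x : ℝ}

theorem mul_sub_gammaOne (hi : 2 < i) :
    2 * (i - 1) * (i - 2) * (x - gammaOne c d i)
      = 2 * (i - 1) * (i - 2) * x - (i - 1) * gammaLinear c d i + √(gammaRadicand c d i) := by
  have h₁ : i - 1 ≠ 0 := by linarith
  have h₂ : i - 2 ≠ 0 := by linarith
  rw [gammaOne]
  field_simp
  ring

theorem le_gammaOne_iff (hi : 2 < i)
    (hx : 2 * (i - 1) * (i - 2) * x ≤ (i - 1) * gammaLinear c d i) :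
    x ≤ gammaOne c d i ↔ gammaRadicand c d i
      ≤ (2 * (i - 1) * (i - 2) * x - (i - 1) * gammaLinear c d i) ^ 2 := by
  have hpos : 0 < 2 * (i - 1) * (i - 2) := mul_pos (by linarith) (by linarith)
  rw [← sub_nonpos, ← mul_le_mul_iff_right₀ hpos, mul_zero, mul_sub_gammaOne hi,
    ← le_neg_iff_add_nonpos_left, Real.sqrt_le_left (by linarith), neg_sq]

theorem eq_gammaOne_iff (hi : 2 < i)
    (hx : 2 * (i - 1) * (i - 2) * x < (i - 1) * gammaLinear c d i) :
    x = gammaOne c d i ↔ gammaRadicand c d i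
      = (2 * (i - 1) * (i - 2) * x - (i - 1) * gammaLinear c d i) ^ 2 := by
  have hpos : 0 < 2 * (i - 1) * (i - 2) := mul_pos (by linarith) (by linarith)
  rw [← sub_eq_zero, ← mul_eq_zero_iff_left hpos.ne', mul_sub_gammaOne hi, add_comm,
    add_eq_zero_iff_eq_neg, Real.sqrt_eq_iff_mul_self_eq_of_pos (by linarith), ← sq, neg_sq,
    eq_comm]

theorem two_mul_mul_lt_mul_gammaLinear (hi : 2 < i) (hd : 0 ≤ d) (hci : i - 1 ≤ c)
    (hc : 3 * i ≤ 2 * c + 4) (hub : (i - 1) * (d + c + x) < (d + 2 * (i - 1)) * c) :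
    2 * (i - 1) * (i - 2) * x < (i - 1) * gammaLinear c d i := by
  have hscaled := mul_lt_mul_of_pos_left hub (show 0 < 2 * (i - 2) by linarith)
  have hd_nonneg : 0 ≤ d * (c - (i - 1)) := mul_nonneg hd (sub_nonneg.2 hci)
  have hc_nonneg : 0 ≤ (i - 1) * (2 * c + 4 - 3 * i) :=
    mul_nonneg (by linarith) (sub_nonneg.2 hc)
  rw [gammaLinear]
  linarith

end GammaOne

section Moments

-- Writing `k = d + (m + 1) + e` and `v = k + (m + 1) + w` keeps the counts below free of truncated
-- subtraction; then `i = m + 2`, `c = m + 1 + e` and `v - k = m + 1 + w`.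
variable {𝓑 : Finset (Finset α)} {k d m e w : ℕ}

theorem levelMoment_two_mul (hk : (𝓑 : Set (Finset α)).Sized k)
    (hd : (𝓑 : Set (Finset α)).Pairwise fun B C ↦ #(B ∩ C) ≤ d)
    (hβ : ∀ X : Finset α, #X = d + 2 * (m + 1) + 1 →
      ∃! B, B ∈ 𝓑 ∧ d + (m + 1) + 1 ≤ #(X ∩ B))
    (he : k = d + (m + 1) + e) (hw : Fintype.card α = k + (m + 1) + w) :
    levelMoment 𝓑 d m 2 * ((d + m + 1) * ((e + 1) * e))
      = levelMoment 𝓑 d m 1 * ((d + m + 1) * ((e + 1) * e) + (m + 1) * ((w + 1) * w)) := by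
  have hfirst := levelMoment_succ_one_mul (m := m) hk hd
  have hsecond := levelMoment_succ_two_mul_sq_add (m := m) hk hd
  have hnext := levelMoment_succ_mul hk hβ 1
  rw [show k - (d + m) = e + 1 by omega, show Fintype.card α - k - m = w + 1 by omega] at hfirst
  rw [show k - d - m = e + 1 by omega] at hsecond
  rw [show k - (d + (m + 1)) = e by omega,
    show Fintype.card α - (d + 2 * (m + 1)) = w + e by omega] at hnext
  refine mul_right_cancel₀ (Nat.mul_pos e.succ_pos m.succ_pos).ne' ?_
  simp only [Nat.succ_eq_add_one]
  zify at hfirst hsecond hnext ⊢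
  linear_combination (-((d + m + 1) * e * (m + 1) : ℤ)) * hsecond
    + ((d + m + 1) * (m + 1) ^ 3 : ℤ) * hnext + ((m + 1) ^ 2 * w : ℤ) * hfirst

theorem levelMoment_zero_mul_add (hk : (𝓑 : Set (Finset α)).Sized k)
    (hd : (𝓑 : Set (Finset α)).Pairwise fun B C ↦ #(B ∩ C) ≤ d)
    (hβ : ∀ X : Finset α, #X = d + 2 * (m + 1) + 1 →
      ∃! B, B ∈ 𝓑 ∧ d + (m + 1) + 1 ≤ #(X ∩ B))
    (he : k = d + (m + 1) + e) (hw : Fintype.card α = k + (m + 1) + w) :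
    levelMoment 𝓑 d m 0 * ((w + e + 2) * (w + e + 1) * ((d + m + 1) * (m + 1) * (w + e)))
        + levelMoment 𝓑 d m 1 * (e + 1) * ((w + 1) * (w + e) * ((m + 1) * m))
      = levelMoment 𝓑 d m 1 * (e + 1) * ((d + m + 1) * (m + 1) * (w + e) * e
        + (w + 1) * e * ((d + 2 * m + 2) * (d + 2 * m + 1))) := by
  have hfirst := levelMoment_succ_one_mul (m := m) hk hd
  have hnext := levelMoment_succ_mul hk hβ 0
  have hflag := levelMoment_zero_mul_choose_two_add (m := m) hk hd
  rw [show k - (d + m) = e + 1 by omega, show Fintype.card α - k - m = w + 1 by omega] at hfirst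
  rw [show k - (d + (m + 1)) = e by omega,
    show Fintype.card α - (d + 2 * (m + 1)) = w + e by omega, zero_add] at hnext
  rw [show k - (d + m) = e + 1 by omega,
    show Fintype.card α - (d + 2 * m) = w + e + 2 by omega] at hflag
  have hflagQ := congrArg (Nat.cast (R := ℚ)) hflag
  push_cast [Nat.cast_choose_two] at hflagQ
  qify at hfirst hnext ⊢
  linear_combination (2 * (d + m + 1) * (m + 1) * (w + e) : ℚ) * hflagQ
    - ((d + m + 1) * (m + 1) * (d + 2 * m + 2) * (d + 2 * m + 1) : ℚ) * hnext
    + (e * (d + 2 * m + 2) * (d + 2 * m + 1) - (w + e) * (m + 1) * m : ℚ) * hfirst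

theorem levelMoment_one_pos (hk : (𝓑 : Set (Finset α)).Sized k)
    (hd : (𝓑 : Set (Finset α)).Pairwise fun B C ↦ #(B ∩ C) ≤ d) (hne : 𝓑.Nonempty)
    (hdm : d + m ≤ k) (hkm : k + m ≤ Fintype.card α) : 0 < levelMoment 𝓑 d m 1 := by
  rw [levelMoment_one hk hd]
  exact Nat.mul_pos hne.card_pos
    (Nat.mul_pos (Nat.choose_pos hdm) (Nat.choose_pos (Nat.le_sub_of_add_le' hkm)))

theorem sq_levelMoment_one_le :
    levelMoment 𝓑 d m 1 ^ 2 ≤ levelMoment 𝓑 d m 0 * levelMoment 𝓑 d m 2 := by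
  rw [levelMoment_zero]
  simpa only [levelMoment, pow_one, Nat.cast_id] using
    sq_sum_le_card_mul_sum_sq (s := levelFamily 𝓑 d m) (f := fun X ↦ #(extremalBlocks 𝓑 d m X))

theorem levelMoment_zero_mul_two_eq_sq_iff :
    levelMoment 𝓑 d m 0 * levelMoment 𝓑 d m 2 = levelMoment 𝓑 d m 1 ^ 2 ↔
      ∃ n, ∀ X ∈ levelFamily 𝓑 d m, #(extremalBlocks 𝓑 d m X) = n := by
  have hvar := card_mul_sum_sq_eq_sq_sum_iff (S := levelFamily 𝓑 d m)
    (f := fun X ↦ (#(extremalBlocks 𝓑 d m X) : ℤ))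
  norm_cast at hvar
  rw [levelMoment_zero]
  simp only [levelMoment, pow_one, hvar]
  constructor
  · intro h
    obtain hempty | ⟨X₀, hX₀⟩ := (levelFamily 𝓑 d m).eq_empty_or_nonempty
    · simp only [hempty, notMem_empty, false_imp_iff, implies_true, exists_const]
    · exact ⟨_, fun X hX ↦ h X hX X₀ hX₀⟩
  · rintro ⟨n, hn⟩ X hX Y hY
    rw [hn X hX, hn Y hY]

theorem levelMoment_variance_mul_eq (hk : (𝓑 : Set (Finset α)).Sized k)
    (hd : (𝓑 : Set (Finset α)).Pairwise fun B C ↦ #(B ∩ C) ≤ d)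
    (hβ : ∀ X : Finset α, #X = d + 2 * (m + 1) + 1 →
      ∃! B, B ∈ 𝓑 ∧ d + (m + 1) + 1 ≤ #(X ∩ B))
    (he : k = d + (m + 1) + e) (hw : Fintype.card α = k + (m + 1) + w) :
    (levelMoment 𝓑 d m 0 * levelMoment 𝓑 d m 2 - levelMoment 𝓑 d m 1 ^ 2 : ℝ)
        * (4 * (m + 1) ^ 2 * m * (d + m + 1) ^ 2 * ((e + 1) * e)
          * ((w + e + 2) * (w + e + 1) * (w + e)))
      = (levelMoment 𝓑 d m 1 : ℝ) ^ 2 * (e + 1) * (w + 1)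
        * ((d + 2 * (m + 1)) * (m + 1 + e) - (m + 1) * (d + (m + 1 + e) + (m + 1 + w)))
        * ((2 * (m + 1) * m * (m + 1 + w) - (m + 1) * gammaLinear (m + 1 + e) d (m + 2)) ^ 2
          - gammaRadicand (m + 1 + e) d (m + 2)) := by
  have htwo := congrArg (Nat.cast (R := ℝ)) (levelMoment_two_mul hk hd hβ he hw)
  have hzero := congrArg (Nat.cast (R := ℝ)) (levelMoment_zero_mul_add hk hd hβ he hw)
  push_cast at htwo hzero
  rw [gammaLinear, gammaRadicand]
  -- The quartic in `w` that remains has the factor `w + 1` and, linear in `w` as well, the slack in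
  -- `(i - 1)v < (d + 2(i - 1))c`; completing the square in the cofactor gives `(…)² - D`.
  linear_combination (4 * (m + 1) * m : ℝ) *
    ((levelMoment 𝓑 d m 2 * ((d + m + 1) * ((e + 1) * e)) : ℝ) * hzero
      + (levelMoment 𝓑 d m 1 * (e + 1) * ((d + m + 1) * (m + 1) * (w + e) * e
        + (w + 1) * e * ((d + 2 * m + 2) * (d + 2 * m + 1))
        - (w + 1) * (w + e) * ((m + 1) * m)) : ℝ) * htwo)

end Moments

section BetaDesign

variable {𝓑 : Finset (Finset α)} {v k d i m : ℕ}

theorem IsDesign.two_mul_le_add (h : IsDesign 𝓑 v k d) : 2 * k ≤ v + d := by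
  obtain ⟨rfl, -, -, -, hk, -, B, hB, C, hC, -, hBC⟩ := h
  have hunion := card_union_add_card_inter B C
  have hle := card_le_univ (B ∪ C)
  rw [hk B hB, hk C hC] at hunion
  omega

theorem IsBetaDesign.add_le (h : IsBetaDesign 𝓑 v k d i) : d + i ≤ k := by
  obtain ⟨⟨rfl, -, hdk, hkv, hk, -⟩, -, hi, hβ⟩ := h
  obtain ⟨X, -, hX⟩ := exists_subset_card_eq
    (show d + 2 * i - 1 ≤ #(univ : Finset α) by rw [card_univ]; omega)
  obtain ⟨B, ⟨hB, hle⟩, -⟩ := hβ X hX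
  exact hle.trans ((card_le_card inter_subset_right).trans (hk B hB).le)

theorem S1_eq_levelFamily (hi : 2 ≤ i) : S1 𝓑 d i = levelFamily 𝓑 d (i - 2) := by
  rw [S1, levelFamily, Nat.add_sub_assoc hi]

theorem IsBetaDesign.exists_pos_variance_eq {c : ℕ} (h : IsBetaDesign 𝓑 v k d i) (hi : 3 ≤ i)
    (hc : c = k - d) (hub : (i - 1) * v < (d + 2 * (i - 1)) * (k - d)) :
    ∃ κ : ℝ, 0 < κ ∧
      (levelMoment 𝓑 d (i - 2) 0 * levelMoment 𝓑 d (i - 2) 2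
          - levelMoment 𝓑 d (i - 2) 1 ^ 2 : ℝ)
        = κ * ((2 * (i - 1) * (i - 2) * (v - k) - (i - 1) * gammaLinear c d i) ^ 2
          - gammaRadicand c d i) := by
  have hdi := h.add_le
  have hdesign := h.1.two_mul_le_add
  obtain ⟨⟨rfl, hcard, -, -, hk, hd, -⟩, -, -, hβ⟩ := h
  obtain ⟨m, rfl⟩ : ∃ m, i = m + 2 := ⟨i - 2, by omega⟩
  obtain ⟨e, he⟩ : ∃ e, k = d + (m + 1) + e := ⟨k - d - (m + 1), by omega⟩
  obtain ⟨w, hw⟩ : ∃ w, Fintype.card α = k + (m + 1) + w :=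
    ⟨Fintype.card α - k - (m + 1), by omega⟩
  have hpos : 0 < levelMoment 𝓑 d m 1 :=
    levelMoment_one_pos hk hd (card_pos.1 (by omega)) (by omega) (by omega)
  have hvar := levelMoment_variance_mul_eq hk hd (fun X hX ↦ hβ X (by omega)) he hw
  have hslack : (0 : ℝ) < (d + 2 * (m + 1)) * (m + 1 + e)
      - (m + 1) * (d + (m + 1 + e) + (m + 1 + w)) := by
    rw [hw, show k - d = m + 1 + e by omega, he] at hub
    rw [sub_pos]
    exact_mod_cast (by simpa [add_assoc] using hub)
  have hm : 0 < m := by omega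
  have he_pos : 0 < e := by omega
  have hc' : (c : ℝ) = m + 1 + e := by exact_mod_cast (show c = m + 1 + e by omega)
  have hvk : (Fintype.card α - k : ℝ) = m + 1 + w := by rw [hw]; push_cast; ring
  have hi₁ : ((m + 2 : ℕ) - 1 : ℝ) = m + 1 := by push_cast; ring
  have hi₂ : ((m + 2 : ℕ) - 2 : ℝ) = m := by push_cast; ring
  rw [hc', hvk, hi₁, hi₂, Nat.add_sub_cancel, Nat.cast_add m, Nat.cast_two]
  exact exists_pos_eq_mul_of_mul_eq_mul (by positivity) (mul_pos (by positivity) hslack) hvar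

end BetaDesign

theorem IsDesign.two_mul_sub_one_lt {𝓑 : Finset (Finset α)} {v k d i : ℕ}
    (h : IsDesign 𝓑 v k d) (hv : 2 * k ≤ v)
    (hub : (i - 1) * v < (d + 2 * (i - 1)) * (k - d)) : 2 * (i - 1) < k - d := by
  obtain ⟨c, rfl⟩ : ∃ c, k = d + c := ⟨k - d, by have := h.2.2.1; omega⟩
  rw [Nat.add_sub_cancel_left] at hub ⊢
  by_contra! hle
  nlinarith [Nat.mul_le_mul_left (i - 1) hv, Nat.mul_le_mul_left d hle]

theorem beta_design_upper_bound_v_general (𝓑 : Finset (Finset α)) (v k d i c : ℕ)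
    (hB : IsBetaDesign 𝓑 v k d i) (hi : 3 ≤ i) (hc : c = k - d)
    (hub : (i - 1) * v < (d + 2 * (i - 1)) * (k - d)) (hic : 3 * i ≤ 2 * c + 4) :
    (v : ℝ) ≤ k + gammaOne c d i ∧
    ((v : ℝ) = k + gammaOne c d i ↔ ∃ n : ℕ, ∀ X ∈ S1 𝓑 d i,
      #{B ∈ 𝓑 | #(X ∩ B) = d + i - 2} = n) := by
  have hdi := hB.add_le
  have hiR : (2 : ℝ) < i := by exact_mod_cast hi
  have hk : (k : ℝ) = d + c := by exact_mod_cast (show k = d + c by omega)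
  have hvertex : 2 * (i - 1) * (i - 2) * (v - k) < (i - 1) * gammaLinear c d i := by
    refine two_mul_mul_lt_mul_gammaLinear hiR d.cast_nonneg ?_ (by exact_mod_cast hic) ?_
    · rw [sub_le_iff_le_add]
      exact_mod_cast (show i ≤ c + 1 by omega)
    · rw [← hc] at hub
      rw [hk, add_sub_cancel, ← Nat.cast_pred (by omega)]
      exact_mod_cast hub
  obtain ⟨κ, hκ, hvar⟩ := hB.exists_pos_variance_eq hi hc hub
  rw [← sub_le_iff_le_add', ← sub_eq_iff_eq_add', le_gammaOne_iff hiR hvertex.le,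
    eq_gammaOne_iff hiR hvertex, S1_eq_levelFamily (by omega), Nat.add_sub_assoc (by omega)]
  refine ⟨sub_nonneg.1 ((mul_nonneg_iff_of_pos_left hκ).1 ?_), ?_⟩
  · rw [← hvar, sub_nonneg]
    exact_mod_cast sq_levelMoment_one_le
  · rw [eq_comm, ← sub_eq_zero, ← mul_eq_zero_iff_left hκ.ne', ← hvar, sub_eq_zero]
    exact_mod_cast levelMoment_zero_mul_two_eq_sq_iff

/-- **Theorem 1.** Let `𝓑` be a `β(i)` design with parameter `(v, k, d)`, `i ≥ 3`,
`v ≥ 2k`, `c = k - d`, and suppose `v` does not achieve the upper bound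
`(d + 2(i-1))(k-d)/(i-1)`.  Then `v ≤ k + γ₁`, with equality if and only if the number
of blocks `B` with `|B ∩ X| = d + i - 2` does not depend on the choice of `X ∈ S₁`. -/
theorem beta_design_upper_bound_v (𝓑 : Finset (Finset α)) (v k d i c : ℕ)
    (hB : IsBetaDesign 𝓑 v k d i) (hi : 3 ≤ i) (hv : 2 * k ≤ v) (hc : c = k - d)
    (hub : (i - 1) * v < (d + 2 * (i - 1)) * (k - d))
    (γ₁ : ℝ)
    (hγ₁ : γ₁ = ((2 * (c : ℝ) - 2 * (i : ℝ) + 2) * (d : ℝ) + 2 * ((i : ℝ) - 1) * (c : ℝ)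
        - 3 * (i : ℝ) + 4) / (2 * ((i : ℝ) - 2))
      - (1 / (2 * ((i : ℝ) - 1) * ((i : ℝ) - 2))) * Real.sqrt
          (4 * ((i : ℝ) - 1) * ((c : ℝ) - (i : ℝ) + 1) * ((c : ℝ) - 2 * (i : ℝ) + 3) * (d : ℝ) ^ 2
           + 4 * ((i : ℝ) - 1) * (3 * (i : ℝ) - 4) * ((c : ℝ) - (i : ℝ) + 1)
              * ((c : ℝ) - 2 * (i : ℝ) + 3) * (d : ℝ)
           + ((i : ℝ) - 1) ^ 2 * (4 * (2 * (i : ℝ) - 3) * (c : ℝ) ^ 2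
              - 4 * (3 * (i : ℝ) - 4) * (2 * (i : ℝ) - 3) * (c : ℝ)
              + 16 * (i : ℝ) ^ 3 - 63 * (i : ℝ) ^ 2 + 80 * (i : ℝ) - 32))) :
    (v : ℝ) ≤ (k : ℝ) + γ₁ ∧
    ((v : ℝ) = (k : ℝ) + γ₁ ↔ ∃ m : ℕ, ∀ X ∈ S1 𝓑 d i,
      (𝓑.filter (fun B => (X ∩ B).card = d + i - 2)).card = m) := by
  have hic := hB.1.two_mul_sub_one_lt hv hub
  exact hγ₁ ▸ beta_design_upper_bound_v_general 𝓑 v k d i c hB hi hc hub (by omega)
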